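/- Let F₄ = GF(4), let n be odd, let g₁, g₂ be monic divisors of Xⁿ−1 in F₄[X], and let ν ∈ F₄[X]. Let C ⊆ F₄^{2n} be the F₄-span of all vectors ([a·ν·g₁]ₙ, [a·g₁]ₙ) and ([b·g₂]ₙ, [b·ν·g₂]ₙ) for a, b ∈ F₄[X], and let D ⊆ F₄^{2n} be the F₄-span of all vectors ([−ν̄·c·g₁^{⊥h}]ₙ, [c·g₁^{⊥h}]ₙ) and ([s·g₂^{⊥h}]ₙ, [−ν̄·s·g₂^{⊥h}]ₙ) for c, s ∈ F₄[X]. Then every vector of D is Hermitian-orthogonal to every vector of C, i.e., D ⊆ C^{⊥h}. -/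

import Mathlib

open Polynomial

set_option synthInstance.maxHeartbeats 1000000
set_option maxHeartbeats 1000000

noncomputable section

/-- The field `F₄ = GF(4)`. -/
abbrev F4 : Type := GaloisField 2 2

/-- The coefficient vector `[p]ₙ ∈ F₄ⁿ` of the remainder of `p` modulo `Xⁿ - 1`
(coefficient of `X^i` in position `i`). -/
def coeffVec (n : ℕ) (p : Polynomial F4) : Fin n → F4 :=
  fun i => (p % (X ^ n - 1)).coeff i

/-- The Hermitian inner product `⟨u,v⟩_h = ∑ i, u i * (v i)²` on `F₄^m`. -/
def hermInner {m : ℕ} (u v : Fin m → F4) : F4 := ∑ i, u i * (v i) ^ 2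

/-- The Hermitian inner product on `F₄ⁿ × F₄ⁿ`: the sum of the Hermitian inner
products of the two components. -/
def hermInner2 {n : ℕ} (u v : (Fin n → F4) × (Fin n → F4)) : F4 :=
  hermInner u.1 v.1 + hermInner u.2 v.2

/-- The conjugate transform `f̄ := f₀² + ∑_{i=1}^{n-1} f_i² X^{n-i}`, where `f` is first
reduced modulo `Xⁿ - 1`. -/
def conjT (n : ℕ) (f : Polynomial F4) : Polynomial F4 :=
  C (((f % (X ^ n - 1)).coeff 0) ^ 2) +
    ∑ i ∈ Finset.Ico 1 n, C (((f % (X ^ n - 1)).coeff i) ^ 2) * X ^ (n - i)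

/-- The Hermitian dual generator `g^{⊥h}(X) := ∑_{j=0}^{deg h} (h_j)² X^{deg h - j}`,
the conjugate reciprocal of the check polynomial `h = (Xⁿ-1)/g`. -/
def dualGen (n : ℕ) (g : Polynomial F4) : Polynomial F4 :=
  ∑ j ∈ Finset.range (((X ^ n - 1) / g).natDegree + 1),
    C ((((X ^ n - 1) / g).coeff j) ^ 2) * X ^ (((X ^ n - 1) / g).natDegree - j)

lemma hermInner_add_right {m : ℕ} (u v w : Fin m → F4) :
    hermInner u (v + w) = hermInner u v + hermInner u w := by
  simp only [hermInner, Pi.add_apply]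
  rw [← Finset.sum_add_distrib]
  refine Finset.sum_congr rfl fun i _ => ?_
  rw [add_pow_char (v i) (w i) 2, mul_add]

lemma hermInner_smul_right {m : ℕ} (c : F4) (u v : Fin m → F4) :
    hermInner u (c • v) = c ^ 2 * hermInner u v := by
  simp only [hermInner, Pi.smul_apply, smul_eq_mul, mul_pow, Finset.mul_sum]
  exact Finset.sum_congr rfl fun i _ => by ring

/-- The Hermitian dual code `C^{⊥h} = {v | ∀ u ∈ C, ⟨u,v⟩_h = 0}` of a linear code in `F₄^m`. -/
def hermDual {m : ℕ} (Ccode : Submodule F4 (Fin m → F4)) : Submodule F4 (Fin m → F4) where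
  carrier := {v | ∀ u ∈ Ccode, hermInner u v = 0}
  zero_mem' := by intro u _; simp [hermInner]
  add_mem' := by
    intro v w hv hw u hu
    rw [hermInner_add_right, hv u hu, hw u hu, add_zero]
  smul_mem' := by
    intro c v hv u hu
    rw [hermInner_smul_right, hv u hu, mul_zero]

lemma hermInner2_add_right {n : ℕ} (u v w : (Fin n → F4) × (Fin n → F4)) :
    hermInner2 u (v + w) = hermInner2 u v + hermInner2 u w := by
  simp only [hermInner2, Prod.fst_add, Prod.snd_add, hermInner_add_right]
  ring

lemma hermInner2_smul_right {n : ℕ} (c : F4) (u v : (Fin n → F4) × (Fin n → F4)) :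
    hermInner2 u (c • v) = c ^ 2 * hermInner2 u v := by
  simp only [hermInner2, Prod.smul_fst, Prod.smul_snd, hermInner_smul_right]
  ring

/-- The Hermitian dual code of a linear code in `F₄ⁿ × F₄ⁿ` (identified with `F₄^{2n}`). -/
def hermDualPair {n : ℕ} (Ccode : Submodule F4 ((Fin n → F4) × (Fin n → F4))) :
    Submodule F4 ((Fin n → F4) × (Fin n → F4)) where
  carrier := {v | ∀ u ∈ Ccode, hermInner2 u v = 0}
  zero_mem' := by intro u _; simp [hermInner2, hermInner]
  add_mem' := by
    intro v w hv hw u hu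
    rw [hermInner2_add_right, hv u hu, hw u hu, add_zero]
  smul_mem' := by
    intro c v hv u hu
    rw [hermInner2_smul_right, hv u hu, mul_zero]

/-- Hamming weight of a vector. -/
def hammingWt {m : ℕ} (u : Fin m → F4) : ℕ := Nat.card {i : Fin m // u i ≠ 0}

/-- The 2-generator quasi-cyclic code `C(g₁,g₂,ν)` of length `2n` and index 2:
the `F₄`-span of all `([a·ν·g₁]ₙ, [a·g₁]ₙ)` and `([b·g₂]ₙ, [b·ν·g₂]ₙ)`. -/
def Cqc (n : ℕ) (g₁ g₂ ν : Polynomial F4) : Submodule F4 ((Fin n → F4) × (Fin n → F4)) :=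
  Submodule.span F4
    ({x | ∃ a : Polynomial F4, x = (coeffVec n (a * ν * g₁), coeffVec n (a * g₁))} ∪
     {x | ∃ b : Polynomial F4, x = (coeffVec n (b * g₂), coeffVec n (b * ν * g₂))})

/-- The quasi-cyclic code `D`: the `F₄`-span of all `([-ν̄·c·g₁^{⊥h}]ₙ, [c·g₁^{⊥h}]ₙ)`
and `([s·g₂^{⊥h}]ₙ, [-ν̄·s·g₂^{⊥h}]ₙ)`. -/
def Dqc (n : ℕ) (g₁ g₂ ν : Polynomial F4) : Submodule F4 ((Fin n → F4) × (Fin n → F4)) :=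
  Submodule.span F4
    ({x | ∃ c : Polynomial F4,
        x = (coeffVec n (-(conjT n ν) * c * dualGen n g₁), coeffVec n (c * dualGen n g₁))} ∪
     {x | ∃ s : Polynomial F4,
        x = (coeffVec n (s * dualGen n g₂), coeffVec n (-(conjT n ν) * s * dualGen n g₂))})

/-- The quotient ring `R = F₄[X]/(Xⁿ - 1)`. -/
abbrev Rng (n : ℕ) : Type := Polynomial F4 ⧸ Ideal.span ({X ^ n - 1} : Set (Polynomial F4))

/-- The natural projection `F₄[X] → R`. -/
def toRng (n : ℕ) : Polynomial F4 →+* Rng n := Ideal.Quotient.mk _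

/-- The `R`-linear map `R → R × R`, `a ↦ (a·û, a·v̂)`, where `û, v̂` are the images of
`u, v` in `R`. -/
def qcMap (n : ℕ) (u v : Polynomial F4) : Rng n →ₗ[Rng n] Rng n × Rng n :=
  (LinearMap.toSpanSingleton (Rng n) (Rng n) (toRng n u)).prod
    (LinearMap.toSpanSingleton (Rng n) (Rng n) (toRng n v))

/-
Work in `R = F₄[X]/(Xⁿ - 1)`, where `X` is invertible with inverse `Xⁿ⁻¹`. Let `p ↦ p*` apply the
Frobenius to the coefficients and send `X` to `X⁻¹`. The Hermitian inner product of `[p]ₙ` and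
`[q]ₙ` is the constant coefficient of `p q*` in `R`. Since `(f̄)* = f` in `R`, multiplication by
`f̄` is adjoint to multiplication by `f`. Since `(g^{⊥h})*` is a unit times `h = (Xⁿ - 1)/g`, the
product `g (g^{⊥h})*` vanishes, so multiples of `g` and of `g^{⊥h}` are orthogonal. Pairing a
generator of `C` with a generator of `D` and moving `ν̄` across leaves either two such vanishing
terms or two equal terms, which cancel in characteristic 2.
-/

section XPowSubOne

lemma X_pow_sub_one_dvd_monomial_sub {R : Type*} [CommRing R] (n i : ℕ) (a : R) :
    (X ^ n - 1 : R[X]) ∣ monomial i a - monomial (i % n) a := by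
  have hpow : (X ^ n - 1 : R[X]) ∣ (X ^ n) ^ (i / n) - 1 := by
    simpa only [one_pow] using sub_dvd_pow_sub_pow (X ^ n : R[X]) 1 (i / n)
  have hfactor : (monomial i a - monomial (i % n) a : R[X]) =
      ((X ^ n) ^ (i / n) - 1) * monomial (i % n) a := by
    nth_rw 1 [← Nat.div_add_mod i n]
    simp only [← C_mul_X_pow_eq_monomial, pow_add, pow_mul]
    ring
  exact hfactor ▸ hpow.mul_right _

variable {K : Type*} [Field K] {n : ℕ}

lemma monomial_mod_X_pow_sub_one (hn : n ≠ 0) (i : ℕ) (a : K) :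
    monomial i a % (X ^ n - 1 : K[X]) = monomial (i % n) a := by
  have hdegree : (monomial (i % n) a : K[X]).degree < (X ^ n - 1 : K[X]).degree := by
    rw [← C_1, degree_X_pow_sub_C (Nat.pos_of_ne_zero hn)]
    exact (degree_monomial_le _ _).trans_lt (mod_cast Nat.mod_lt i (Nat.pos_of_ne_zero hn))
  have hne : (X ^ n - 1 : K[X]) ≠ 0 := ne_zero_of_degree_gt hdegree
  rw [← (mod_eq_self_iff hne).2 hdegree, ← sub_eq_zero, ← sub_mod]
  exact EuclideanDomain.mod_eq_zero.2 (X_pow_sub_one_dvd_monomial_sub n i a)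

lemma natDegree_mod_X_pow_sub_one_lt (hn : n ≠ 0) (f : K[X]) :
    (f % (X ^ n - 1)).natDegree < n := by
  have hdegree : (X ^ n - 1 : K[X]).natDegree = n := by rw [← C_1, natDegree_X_pow_sub_C]
  simpa only [hdegree] using natDegree_mod_lt f (hdegree.trans_ne hn)

end XPowSubOne

lemma frobenius_frobenius_F4 (a : F4) : frobenius F4 2 (frobenius F4 2 a) = a := by
  have : Fintype F4 := Fintype.ofFinite F4
  have hcard : Fintype.card F4 = 2 ^ 2 := by
    rw [← Nat.card_eq_fintype_card, GaloisField.card 2 2 two_ne_zero]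
  exact DFunLike.congr_fun (FiniteField.frobenius_pow hcard) a

section HermitianForm

variable {m n : ℕ}

lemma hermInner_add_left (u v w : Fin m → F4) :
    hermInner (u + v) w = hermInner u w + hermInner v w := by
  simp only [hermInner, Pi.add_apply, add_mul, Finset.sum_add_distrib]

lemma hermInner_smul_left (c : F4) (u v : Fin m → F4) :
    hermInner (c • u) v = c * hermInner u v := by
  simp only [hermInner, Pi.smul_apply, smul_eq_mul, mul_assoc, Finset.mul_sum]

lemma hermInner_single_left (i : Fin m) (a : F4) (v : Fin m → F4) :
    hermInner (Pi.single i a) v = a * v i ^ 2 := by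
  simp only [hermInner, Pi.single_apply, ite_mul, zero_mul, Finset.sum_ite_eq', Finset.mem_univ,
    if_true]

lemma hermInner2_zero_left (v : (Fin n → F4) × (Fin n → F4)) : hermInner2 0 v = 0 := by
  simp [hermInner2, hermInner]

lemma hermInner2_add_left (u v w : (Fin n → F4) × (Fin n → F4)) :
    hermInner2 (u + v) w = hermInner2 u w + hermInner2 v w := by
  simp only [hermInner2, Prod.fst_add, Prod.snd_add, hermInner_add_left]
  ring

lemma hermInner2_smul_left (c : F4) (u v : (Fin n → F4) × (Fin n → F4)) :
    hermInner2 (c • u) v = c * hermInner2 u v := by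
  simp only [hermInner2, Prod.smul_fst, Prod.smul_snd, hermInner_smul_left, mul_add]

lemma span_le_hermDualPair_span {S T : Set ((Fin n → F4) × (Fin n → F4))}
    (h : ∀ v ∈ T, ∀ u ∈ S, hermInner2 u v = 0) :
    Submodule.span F4 T ≤ hermDualPair (Submodule.span F4 S) := by
  refine Submodule.span_le.2 fun v hv u hu => ?_
  induction hu using Submodule.span_induction with
  | mem u hu => exact h v hv u hu
  | zero => exact hermInner2_zero_left v
  | add u w _ _ hu hw => rw [hermInner2_add_left, hu, hw, add_zero]
  | smul c u _ hu => rw [hermInner2_smul_left, hu, mul_zero]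

end HermitianForm

section CoeffVec

variable {n : ℕ}

lemma coeffVec_add (p q : F4[X]) : coeffVec n (p + q) = coeffVec n p + coeffVec n q := by
  funext i
  simp only [coeffVec, add_mod, coeff_add, Pi.add_apply]

lemma coeffVec_zero : coeffVec n 0 = 0 := by
  funext i
  simp only [coeffVec, EuclideanDomain.zero_mod, coeff_zero, Pi.zero_apply]

lemma coeffVec_eq_of_toRng_eq {p q : F4[X]} (h : toRng n p = toRng n q) :
    coeffVec n p = coeffVec n q := by
  have hdvd : X ^ n - 1 ∣ p - q := Ideal.mem_span_singleton.1 (Ideal.Quotient.eq.1 h)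
  have hmod : p % (X ^ n - 1) = q % (X ^ n - 1) := by
    rw [← sub_eq_zero, ← sub_mod]
    exact EuclideanDomain.mod_eq_zero.2 hdvd
  funext i
  simp only [coeffVec, hmod]

lemma coeffVec_monomial [NeZero n] (i : ℕ) (a : F4) :
    coeffVec n (monomial i a) = Pi.single (Fin.ofNat n i) a := by
  funext k
  simp only [coeffVec, monomial_mod_X_pow_sub_one (NeZero.ne n), coeff_monomial, Pi.single_apply,
    Fin.ext_iff, Fin.val_ofNat, eq_comm]

end CoeffVec

section Conjugation

variable {n : ℕ}

/-- The conjugation `p ↦ p*` that squares the coefficients and inverts `X` modulo `Xⁿ - 1`, used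
to express the Hermitian inner product through a product of polynomials. It is lifted from the
quotient ring to polynomials by sending `X` to `Xⁿ⁻¹`. -/
def conjHom (n : ℕ) : F4[X] →+* F4[X] :=
  eval₂RingHom (C.comp (frobenius F4 2)) (X ^ (n - 1))

lemma conjHom_C (a : F4) : conjHom n (C a) = C (a ^ 2) :=
  eval₂_C _ _

lemma conjHom_X : conjHom n X = X ^ (n - 1) :=
  eval₂_X _ _

lemma conjHom_monomial (i : ℕ) (a : F4) :
    conjHom n (monomial i a) = monomial ((n - 1) * i) (a ^ 2) := by
  rw [← C_mul_X_pow_eq_monomial, map_mul, map_pow, conjHom_C, conjHom_X, ← pow_mul,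
    C_mul_X_pow_eq_monomial]

lemma ofNat_add_pred_mul_eq_zero_iff [NeZero n] (i j : ℕ) :
    Fin.ofNat n (i + (n - 1) * j) = 0 ↔ Fin.ofNat n i = Fin.ofNat n j := by
  have hpred : ((n - 1 : ℕ) : ZMod n) = -1 := by
    rw [Nat.cast_pred (NeZero.pos n), ZMod.natCast_self, zero_sub]
  calc Fin.ofNat n (i + (n - 1) * j) = 0
      ↔ ((i + (n - 1) * j : ℕ) : ZMod n) = 0 := by
        rw [ZMod.natCast_eq_zero_iff, Nat.dvd_iff_mod_eq_zero, Fin.ext_iff, Fin.val_ofNat,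
          Fin.val_zero]
    _ ↔ (i : ZMod n) = j := by
        rw [Nat.cast_add, Nat.cast_mul, hpred, neg_one_mul, ← sub_eq_add_neg, sub_eq_zero]
    _ ↔ Fin.ofNat n i = Fin.ofNat n j := by
        rw [ZMod.natCast_eq_natCast_iff', Fin.ext_iff, Fin.val_ofNat, Fin.val_ofNat]

lemma hermInner_coeffVec_eq_coeffVec_mul_conjHom [NeZero n] (p q : F4[X]) :
    hermInner (coeffVec n p) (coeffVec n q) = coeffVec n (p * conjHom n q) 0 := by
  induction p using Polynomial.induction_on' with
  | add p r hp hr => rw [coeffVec_add, hermInner_add_left, hp, hr, add_mul, coeffVec_add,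
      Pi.add_apply]
  | monomial i a =>
    induction q using Polynomial.induction_on' with
    | add q r hq hr => rw [coeffVec_add, hermInner_add_right, hq, hr, map_add, mul_add,
        coeffVec_add, Pi.add_apply]
    | monomial j b =>
      rw [conjHom_monomial, monomial_mul_monomial]
      simp only [coeffVec_monomial, hermInner_single_left, Pi.single_apply,
        eq_comm (a := (0 : Fin n)), ofNat_add_pred_mul_eq_zero_iff, ite_pow, mul_ite,
        ne_eq, two_ne_zero, not_false_eq_true, zero_pow, mul_zero]

end Conjugation

section QuotientRing

variable {n : ℕ}

lemma toRng_X_pow_sub_one : toRng n (X ^ n - 1) = 0 :=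
  Ideal.Quotient.eq_zero_iff_mem.2 (Ideal.mem_span_singleton_self _)

lemma toRng_X_pow : toRng n X ^ n = 1 := by
  rw [← map_pow, ← sub_eq_zero, ← map_one (toRng n), ← map_sub, toRng_X_pow_sub_one]

lemma toRng_mod (p : F4[X]) : toRng n (p % (X ^ n - 1)) = toRng n p := by
  nth_rw 2 [← EuclideanDomain.mod_add_div p (X ^ n - 1)]
  rw [map_add, map_mul, toRng_X_pow_sub_one, zero_mul, add_zero]

lemma isUnit_toRng_X [NeZero n] : IsUnit (toRng n X) :=
  IsUnit.of_pow_eq_one toRng_X_pow (NeZero.ne n)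

lemma toRng_conjHom_X_mul [NeZero n] : toRng n (conjHom n X) * toRng n X = 1 := by
  rw [conjHom_X, map_pow, pow_sub_one_mul (NeZero.ne n), toRng_X_pow]

lemma toRng_conjHom_mul_X_pow [NeZero n] (a : F4) (i j : ℕ) :
    toRng n (conjHom n (C (a ^ 2) * X ^ j)) * toRng n X ^ (i + j) = toRng n (C a * X ^ i) := by
  have hsq : (a ^ 2) ^ 2 = a := frobenius_frobenius_F4 a
  calc toRng n (conjHom n (C (a ^ 2) * X ^ j)) * toRng n X ^ (i + j)
      = toRng n (C a) * toRng n X ^ i * (toRng n (conjHom n X) * toRng n X) ^ j := by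
        rw [map_mul, map_mul, conjHom_C, hsq, map_pow, map_pow]
        ring
    _ = toRng n (C a * X ^ i) := by
        rw [toRng_conjHom_X_mul, one_pow, mul_one, map_mul, map_pow]

lemma toRng_conjHom_conjT [NeZero n] (f : F4[X]) :
    toRng n (conjHom n (conjT n f)) = toRng n f := by
  rw [← toRng_mod f, conjT]
  set r := f % (X ^ n - 1)
  have hterm : ∀ i ≤ n, toRng n (conjHom n (C (r.coeff i ^ 2) * X ^ (n - i))) =
      toRng n (C (r.coeff i) * X ^ i) := fun i hi => by
    rw [← toRng_conjHom_mul_X_pow _ i (n - i), Nat.add_sub_of_le hi, toRng_X_pow, mul_one]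
  have hconst : toRng n (conjHom n (C (r.coeff 0 ^ 2))) = toRng n (C (r.coeff 0) * X ^ 0) := by
    simpa only [pow_zero, mul_one, add_zero] using toRng_conjHom_mul_X_pow (n := n) (r.coeff 0) 0 0
  have hsum := congrArg (toRng n) <|
    r.as_sum_range_C_mul_X_pow' (natDegree_mod_X_pow_sub_one_lt (NeZero.ne n) f)
  rw [hsum, Finset.range_eq_Ico, Finset.sum_eq_sum_Ico_succ_bot (NeZero.pos n)]
  simp only [map_add, map_sum]
  rw [hconst, Finset.sum_congr rfl fun i hi => hterm i (Finset.mem_Ico.1 hi).2.le]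

lemma toRng_conjHom_dualGen_mul [NeZero n] (g : F4[X]) :
    toRng n (conjHom n (dualGen n g)) * toRng n X ^ ((X ^ n - 1) / g).natDegree =
      toRng n ((X ^ n - 1) / g) := by
  rw [dualGen]
  set h := (X ^ n - 1) / g
  have hsum := congrArg (toRng n) h.as_sum_range_C_mul_X_pow
  rw [hsum, map_sum, map_sum, map_sum, Finset.sum_mul]
  refine Finset.sum_congr rfl fun j hj => ?_
  have hj : j ≤ h.natDegree := Finset.mem_range_succ_iff.1 hj
  rw [← toRng_conjHom_mul_X_pow _ j (h.natDegree - j), Nat.add_sub_of_le hj]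

lemma toRng_mul_conjHom_dualGen [NeZero n] {g : F4[X]} (hg : g ∣ X ^ n - 1) :
    toRng n (g * conjHom n (dualGen n g)) = 0 := by
  have hg₀ : g ≠ 0 := ne_zero_of_dvd_ne_zero (X_pow_sub_C_ne_zero (NeZero.pos n) 1) hg
  rw [← (isUnit_toRng_X.pow ((X ^ n - 1) / g).natDegree).mul_left_eq_zero, map_mul, mul_assoc,
    toRng_conjHom_dualGen_mul, ← map_mul, EuclideanDomain.mul_div_cancel' hg₀ hg,
    toRng_X_pow_sub_one]

end QuotientRing

section Orthogonality

variable {n : ℕ} [NeZero n]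

lemma hermInner_coeffVec_conjT_mul (f p q : F4[X]) :
    hermInner (coeffVec n p) (coeffVec n (conjT n f * q)) =
      hermInner (coeffVec n (f * p)) (coeffVec n q) := by
  rw [hermInner_coeffVec_eq_coeffVec_mul_conjHom, hermInner_coeffVec_eq_coeffVec_mul_conjHom]
  refine congrFun (coeffVec_eq_of_toRng_eq ?_) 0
  simp only [map_mul, toRng_conjHom_conjT]
  ring

lemma hermInner_coeffVec_eq_zero_of_dvd {g p q : F4[X]} (hg : g ∣ X ^ n - 1) (hp : g ∣ p)
    (hq : dualGen n g ∣ q) : hermInner (coeffVec n p) (coeffVec n q) = 0 := by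
  obtain ⟨a, rfl⟩ := hp
  obtain ⟨c, rfl⟩ := hq
  have hzero : toRng n (g * a * conjHom n (dualGen n g * c)) = toRng n 0 := by
    rw [map_mul (conjHom n), mul_mul_mul_comm, map_mul, toRng_mul_conjHom_dualGen hg, zero_mul,
      map_zero]
  rw [hermInner_coeffVec_eq_coeffVec_mul_conjHom, coeffVec_eq_of_toRng_eq hzero, coeffVec_zero,
    Pi.zero_apply]

end Orthogonality

theorem D_subset_herm_dual_C_general (n : ℕ) (g₁ g₂ ν : Polynomial F4)
    (hg₁ : g₁ ∣ X ^ n - 1) (hg₂ : g₂ ∣ X ^ n - 1) :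
    ∀ v ∈ Dqc n g₁ g₂ ν, ∀ u ∈ Cqc n g₁ g₂ ν, hermInner2 u v = 0 := by
  obtain rfl | hn := eq_or_ne n 0
  · simp [hermInner2, hermInner]
  have : NeZero n := ⟨hn⟩
  refine span_le_hermDualPair_span ?_
  rintro v (⟨c, rfl⟩ | ⟨s, rfl⟩) u (⟨a, rfl⟩ | ⟨b, rfl⟩) <;>
    simp only [hermInner2, CharTwo.neg_eq, mul_assoc (conjT n ν), hermInner_coeffVec_conjT_mul]
  · rw [hermInner_coeffVec_eq_zero_of_dvd hg₁ ((dvd_mul_left _ _).mul_left ν) (dvd_mul_left _ _),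
      hermInner_coeffVec_eq_zero_of_dvd hg₁ (dvd_mul_left _ _) (dvd_mul_left _ _), add_zero]
  · rw [mul_comm b ν, mul_assoc, CharTwo.add_self_eq_zero]
  · rw [mul_comm a ν, mul_assoc, CharTwo.add_self_eq_zero]
  · rw [hermInner_coeffVec_eq_zero_of_dvd hg₂ (dvd_mul_left _ _) (dvd_mul_left _ _),
      hermInner_coeffVec_eq_zero_of_dvd hg₂ ((dvd_mul_left _ _).mul_left ν) (dvd_mul_left _ _),
      add_zero]

/-- Every vector of `D` is Hermitian-orthogonal to every vector of `C`, i.e. `D ⊆ C^{⊥h}`. -/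
theorem D_subset_herm_dual_C (n : ℕ) (hn : Odd n) (g₁ g₂ ν : Polynomial F4)
    (hg₁m : g₁.Monic) (hg₁d : g₁ ∣ X ^ n - 1)
    (hg₂m : g₂.Monic) (hg₂d : g₂ ∣ X ^ n - 1) :
    ∀ v ∈ Dqc n g₁ g₂ ν, ∀ u ∈ Cqc n g₁ g₂ ν, hermInner2 u v = 0 :=
  D_subset_herm_dual_C_general n g₁ g₂ ν hg₁d hg₂d

end
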